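/- arXiv:1907.06761 — 3 statements merged into one kernel-verified Lean document; each statement's English description precedes it below -/
import Mathlib

section
/- Every element of the fixed subring A^G is a ℂ-linear combination of 1 and orbit sums O(kn−i, i) with k ≥ 1 an integer and 0 ≤ i ≤ ⌊kn/2⌋; equivalently, A^G equals the ℂ-linear span of the set {1} ∪ {O(kn−i, i) : k ≥ 1, 0 ≤ i ≤ ⌊kn/2⌋}. -/
/-!
Setting: `lam n = exp(2πi/n)` is a primitive `n`-th root of unity in `ℂ`.
`SkewAlg` is the `(-1)`-skew polynomial ring `A = ℂ⟨u,v⟩/(uv+vu)`, with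
generators `uGen`, `vGen`.  The automorphism `g` (of order `2n`) is determined
by `g u = v`, `g v = lam n • u`, and generates the cyclic group `G`, so that
the fixed subring `A^G` is `{a | g a = a}`.  The orbit sum is
`orbitSum n a b = u^a v^b + (-1)^(a*b) * (lam n)^b • (u^b v^a)`.
-/

noncomputable section

/-- `lam n = exp(2πi/n)`, a primitive `n`-th root of unity. -/
def lam (n : ℕ) : ℂ := Complex.exp (2 * (Real.pi : ℂ) * Complex.I / (n : ℂ))

/-- The defining relation of the `(-1)`-skew polynomial ring: `uv + vu = 0`. -/
inductive SkewRel : FreeAlgebra ℂ (Fin 2) → FreeAlgebra ℂ (Fin 2) → Prop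
  | rel : SkewRel (FreeAlgebra.ι ℂ 0 * FreeAlgebra.ι ℂ 1 + FreeAlgebra.ι ℂ 1 * FreeAlgebra.ι ℂ 0) 0

/-- The skew polynomial ring `A = ℂ⟨u,v⟩/(uv+vu)`. -/
abbrev SkewAlg : Type := RingQuot SkewRel

/-- The generator `u` of `A`. -/
def uGen : SkewAlg := RingQuot.mkAlgHom ℂ SkewRel (FreeAlgebra.ι ℂ 0)

/-- The generator `v` of `A`. -/
def vGen : SkewAlg := RingQuot.mkAlgHom ℂ SkewRel (FreeAlgebra.ι ℂ 1)

/-- Orbit sum `O(a,b) = u^a v^b + (-1)^(ab) λ^b u^b v^a`. -/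
def orbitSum (n a b : ℕ) : SkewAlg :=
  uGen ^ a * vGen ^ b + ((-1 : ℂ) ^ (a * b) * lam n ^ b) • (uGen ^ b * vGen ^ a)


lemma vu_eq : vGen * uGen = (-1 : ℂ) • (uGen * vGen) := by
  have h := RingQuot.mkAlgHom_rel ℂ SkewRel.rel
  rw [map_add, map_mul, map_mul, map_zero] at h
  have h2 : uGen * vGen + (-1 : ℂ) • (uGen * vGen) = 0 := by
    have h3 := add_smul (1 : ℂ) (-1) (uGen * vGen)
    rw [one_smul, add_neg_cancel, zero_smul] at h3
    exact h3.symm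
  exact add_left_cancel (h.trans h2.symm)

lemma v_upow (c : ℕ) : vGen * uGen ^ c = (-1 : ℂ) ^ c • (uGen ^ c * vGen) := by
  induction c with
  | zero => simp
  | succ c ih =>
    rw [pow_succ, ← mul_assoc, ih, smul_mul_assoc, mul_assoc, vu_eq, pow_succ (-1 : ℂ), mul_smul,
      mul_smul_comm, mul_assoc]

lemma vpow_upow (b c : ℕ) :
    vGen ^ b * uGen ^ c = (-1 : ℂ) ^ (b * c) • (uGen ^ c * vGen ^ b) := by
  induction b with
  | zero => simp
  | succ b ih =>
    rw [pow_succ, mul_assoc, v_upow, mul_smul_comm, ← mul_assoc, ih, smul_mul_assoc, smul_smul,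
      mul_assoc, ← pow_add]
    congr 2
    ring

/-- The span of the monomials. -/
def monoSpan : Submodule ℂ SkewAlg :=
  Submodule.span ℂ (Set.range fun p : ℕ × ℕ => uGen ^ p.1 * vGen ^ p.2)

lemma mono_mem (a b : ℕ) : uGen ^ a * vGen ^ b ∈ monoSpan :=
  Submodule.subset_span ⟨(a, b), rfl⟩

lemma monoSpan_mul {x y : SkewAlg} (hx : x ∈ monoSpan) (hy : y ∈ monoSpan) :
    x * y ∈ monoSpan := by
  have h : monoSpan * monoSpan ≤ monoSpan := by
    conv_lhs => rw [monoSpan, Submodule.span_mul_span]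
    rw [Submodule.span_le]
    rintro _ ⟨_, ⟨⟨a, b⟩, rfl⟩, _, ⟨⟨c, d⟩, rfl⟩, rfl⟩
    have e : (uGen ^ a * vGen ^ b) * (uGen ^ c * vGen ^ d) =
        (-1 : ℂ) ^ (b * c) • (uGen ^ (a + c) * vGen ^ (b + d)) := by
      calc _ = uGen ^ a * (vGen ^ b * uGen ^ c) * vGen ^ d := by simp only [mul_assoc]
        _ = _ := by
          rw [vpow_upow, mul_smul_comm, smul_mul_assoc, pow_add, pow_add]
          simp only [mul_assoc]
    simp only [SetLike.mem_coe]
    rw [e]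
    exact Submodule.smul_mem _ _ (mono_mem _ _)
  exact h (Submodule.mul_mem_mul hx hy)

lemma monoSpan_top (y0 : SkewAlg) : y0 ∈ monoSpan := by
  obtain ⟨y, rfl⟩ := RingQuot.mkAlgHom_surjective ℂ SkewRel y0
  induction y using FreeAlgebra.induction with
  | grade0 r =>
    rw [AlgHom.commutes, Algebra.algebraMap_eq_smul_one]
    exact Submodule.smul_mem _ _ (by simpa using mono_mem 0 0)
  | grade1 i =>
    fin_cases i
    · have := mono_mem 1 0
      simpa [uGen] using this
    · have := mono_mem 0 1
      simpa [vGen] using this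
  | mul a b ha hb => rw [map_mul]; exact monoSpan_mul ha hb
  | add a b ha hb => rw [map_add]; exact Submodule.add_mem _ ha hb

lemma lam_prim (n : ℕ) (hn : 0 < n) : IsPrimitiveRoot (lam n) n :=
  Complex.isPrimitiveRoot_exp n hn.ne'

lemma g_mono (n : ℕ) (g : SkewAlg ≃ₐ[ℂ] SkewAlg)
    (hgu : g uGen = vGen) (hgv : g vGen = lam n • uGen) (a b : ℕ) :
    g (uGen ^ a * vGen ^ b) =
      ((-1 : ℂ) ^ (a * b) * lam n ^ b) • (uGen ^ b * vGen ^ a) := by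
  rw [map_mul, map_pow, map_pow, hgu, hgv, smul_pow, mul_smul_comm, vpow_upow, smul_smul, mul_comm]

lemma orbitSum_eq (n : ℕ) (g : SkewAlg ≃ₐ[ℂ] SkewAlg)
    (hgu : g uGen = vGen) (hgv : g vGen = lam n • uGen) (a b : ℕ) :
    orbitSum n a b = uGen ^ a * vGen ^ b + g (uGen ^ a * vGen ^ b) := by
  rw [g_mono n g hgu hgv, orbitSum]

lemma sign_sq (k : ℕ) : (-1 : ℂ) ^ k * (-1 : ℂ) ^ k = 1 := by
  rw [← mul_pow]; simp

lemma g_sq_mono (n : ℕ) (g : SkewAlg ≃ₐ[ℂ] SkewAlg)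
    (hgu : g uGen = vGen) (hgv : g vGen = lam n • uGen) (a b : ℕ) :
    g (g (uGen ^ a * vGen ^ b)) = lam n ^ (a + b) • (uGen ^ a * vGen ^ b) := by
  rw [g_mono n g hgu hgv, map_smul, g_mono n g hgu hgv, smul_smul]
  congr 1
  rw [mul_comm b a, pow_add]
  linear_combination (lam n ^ a * lam n ^ b) * sign_sq (a * b)

lemma g_sq_orbit (n : ℕ) (g : SkewAlg ≃ₐ[ℂ] SkewAlg)
    (hgu : g uGen = vGen) (hgv : g vGen = lam n • uGen) (a b : ℕ) :
    g (g (orbitSum n a b)) = lam n ^ (a + b) • orbitSum n a b := by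
  rw [orbitSum_eq n g hgu hgv, map_add, map_add, g_sq_mono n g hgu hgv, map_smul, smul_add]

lemma orbit_swap (n : ℕ) (a b : ℕ) (h : lam n ^ (a + b) = 1) :
    orbitSum n a b = ((-1 : ℂ) ^ (a * b) * lam n ^ b) • orbitSum n b a := by
  have e : ((-1 : ℂ) ^ (a * b) * lam n ^ b) * ((-1 : ℂ) ^ (b * a) * lam n ^ a) = 1 := by
    rw [mul_comm b a]
    rw [pow_add] at h
    linear_combination (lam n ^ a * lam n ^ b) * sign_sq (a * b) + h
  rw [orbitSum, orbitSum, smul_add, smul_smul, e, one_smul, add_comm]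

lemma orbit_mem (n : ℕ) (hn : 0 < n) (a b : ℕ) (h : n ∣ a + b) :
    orbitSum n a b ∈ Submodule.span ℂ ({1} ∪
        {x : SkewAlg | ∃ k i : ℕ, 1 ≤ k ∧ i ≤ k * n / 2 ∧ x = orbitSum n (k * n - i) i}) := by
  have hl : lam n ^ (a + b) = 1 := ((lam_prim n hn).pow_eq_one_iff_dvd _).2 h
  obtain ⟨k, hk⟩ := h
  rw [mul_comm] at hk
  rcases Nat.eq_zero_or_pos k with rfl | hk0
  · obtain ⟨rfl, rfl⟩ : a = 0 ∧ b = 0 := by omega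
    have e : orbitSum n 0 0 = (2 : ℂ) • (1 : SkewAlg) := by
      simp [orbitSum, two_smul]
    rw [e]
    exact Submodule.smul_mem _ _ (Submodule.subset_span (Or.inl rfl))
  · rcases le_total b a with hba | hba
    · refine Submodule.subset_span (Or.inr ⟨k, b, hk0, by omega, ?_⟩)
      congr 1; omega
    · rw [orbit_swap n a b hl]
      refine Submodule.smul_mem _ _ (Submodule.subset_span (Or.inr ⟨k, a, hk0, by omega, ?_⟩))
      congr 1; omega

/-- The (unnormalised) averaging operator over the group generated by `g`. -/
def avg (n : ℕ) (g : SkewAlg ≃ₐ[ℂ] SkewAlg) : SkewAlg →ₗ[ℂ] SkewAlg :=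
  (∑ j ∈ Finset.range n, (g.toLinearMap * g.toLinearMap : Module.End ℂ SkewAlg) ^ j) *
    (1 + g.toLinearMap : Module.End ℂ SkewAlg)

lemma pow_eigen (T : Module.End ℂ SkewAlg) (c : ℂ) (x : SkewAlg) (h : T x = c • x) (j : ℕ) :
    (T ^ j) x = c ^ j • x := by
  induction j with
  | zero => simp
  | succ j ih => rw [pow_succ, Module.End.mul_apply, h, map_smul, ih, smul_smul, pow_succ']

lemma avg_eigen (n : ℕ) (g : SkewAlg ≃ₐ[ℂ] SkewAlg) (c : ℂ) (x : SkewAlg)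
    (h : g (g (x + g x)) = c • (x + g x)) :
    avg n g x = (∑ j ∈ Finset.range n, c ^ j) • (x + g x) := by
  have h1 : avg n g x = ∑ j ∈ Finset.range n,
      ((g.toLinearMap * g.toLinearMap : Module.End ℂ SkewAlg) ^ j) (x + g x) := by
    simp [avg, Module.End.mul_apply, LinearMap.sum_apply]
  rw [h1, Finset.sum_smul]
  exact Finset.sum_congr rfl fun j _ => pow_eigen _ c _ h j

lemma avg_mem (n : ℕ) (hn : 0 < n) (g : SkewAlg ≃ₐ[ℂ] SkewAlg)
    (hgu : g uGen = vGen) (hgv : g vGen = lam n • uGen) (x : SkewAlg) :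
    avg n g x ∈ Submodule.span ℂ ({1} ∪
        {x : SkewAlg | ∃ k i : ℕ, 1 ≤ k ∧ i ≤ k * n / 2 ∧ x = orbitSum n (k * n - i) i}) := by
  have hx := monoSpan_top x
  induction hx using Submodule.span_induction with
  | mem x hx =>
    obtain ⟨⟨a, b⟩, rfl⟩ := hx
    have hs := g_sq_orbit n g hgu hgv a b
    rw [orbitSum_eq n g hgu hgv] at hs
    have h2 := avg_eigen n g _ _ hs
    rw [← orbitSum_eq n g hgu hgv] at h2
    simp only
    rw [h2]
    by_cases hd : n ∣ a + b
    · exact Submodule.smul_mem _ _ (orbit_mem n hn a b hd)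
    · have h1 : lam n ^ (a + b) ≠ 1 := fun h => hd (((lam_prim n hn).pow_eq_one_iff_dvd _).1 h)
      have h0 : ∑ j ∈ Finset.range n, (lam n ^ (a + b)) ^ j = 0 := by
        rw [geom_sum_eq h1, ← pow_mul, mul_comm, pow_mul, (lam_prim n hn).pow_eq_one]
        simp
      rw [h0, zero_smul]
      exact Submodule.zero_mem _
  | zero => rw [map_zero]; exact Submodule.zero_mem _
  | add x y _ _ hx hy => rw [map_add]; exact Submodule.add_mem _ hx hy
  | smul c x _ hx => rw [map_smul]; exact Submodule.smul_mem _ _ hx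

/-- Every element of the fixed subring `A^G` is a `ℂ`-linear combination of `1`
and orbit sums `O(kn-i, i)` with `k ≥ 1` and `0 ≤ i ≤ ⌊kn/2⌋`. -/
theorem fixed_eq_span (n : ℕ) (hn : 0 < n) (g : SkewAlg ≃ₐ[ℂ] SkewAlg)
    (hgu : g uGen = vGen) (hgv : g vGen = lam n • uGen) :
    {a : SkewAlg | g a = a} =
      ↑(Submodule.span ℂ ({1} ∪
        {x : SkewAlg | ∃ k i : ℕ, 1 ≤ k ∧ i ≤ k * n / 2 ∧ x = orbitSum n (k * n - i) i})) := by
  ext x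
  simp only [Set.mem_ofPred_eq, SetLike.mem_coe]
  constructor
  · intro hx
    have h := avg_mem n hn g hgu hgv x
    rw [avg_eigen n g 1 x (by simp [hx]), hx, ← two_smul ℂ x, smul_smul] at h
    refine (Submodule.smul_mem_iff _ ?_).1 h
    simp [hn.ne']
  · intro hx
    induction hx using Submodule.span_induction with
    | mem x hx =>
      rcases hx with rfl | ⟨k, i, hk, hi, rfl⟩
      · exact map_one g
      · have hik : k * n - i + i = k * n := by omega
        have hl : lam n ^ (k * n - i + i) = 1 := by
          rw [hik, mul_comm, pow_mul, (lam_prim n hn).pow_eq_one, one_pow]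
        rw [orbitSum_eq n g hgu hgv, map_add, g_sq_mono n g hgu hgv, hl, one_smul, add_comm]
    | zero => exact map_zero g
    | add x y _ _ hx hy => rw [map_add, hx, hy]
    | smul c x _ hx => rw [map_smul, hx]
end
end

section
/- Suppose n ≡ 0 (mod 4). Then the fixed subring A^G is strictly larger than the ℂ-subalgebra of A generated by the orbit sums of degree n: A^G ≠ the ℂ-subalgebra generated by {O(n−i, i) : 0 ≤ i ≤ n/2}. (This is the lower bound β(g) ≥ 2n: invariants of degree n do not generate all invariants of degree 2n.) -/
/-!
Setting: `lam n = exp(2πi/n)` is a primitive `n`-th root of unity in `ℂ`.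
`SkewAlg` is the `(-1)`-skew polynomial ring `A = ℂ⟨u,v⟩/(uv+vu)`, with
generators `uGen`, `vGen`.  The automorphism `g` (of order `2n`) is determined
by `g u = v`, `g v = lam n • u`, and generates the cyclic group `G`, so that
the fixed subring `A^G` is `{a | g a = a}`.  The orbit sum is
`orbitSum n a b = u^a v^b + (-1)^(a*b) * (lam n)^b • (u^b v^a)`.
-/

noncomputable section

lemma skew_uv : uGen * vGen + vGen * uGen = 0 := by
  have h := RingQuot.mkAlgHom_rel ℂ SkewRel.rel
  simpa [uGen, vGen] using h

lemma skew_vu : vGen * uGen = -(uGen * vGen) :=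
  eq_neg_of_add_eq_zero_right skew_uv

lemma anti_odd {R : Type*} [Ring R] (x y : R) (h : y * x = -(x * y)) (k : ℕ) :
    y * x ^ (2 * k + 1) = -(x ^ (2 * k + 1) * y) := by
  induction k with
  | zero => simpa using h
  | succ k ih =>
    have e : x ^ (2 * (k + 1) + 1) = x ^ (2 * k + 1) * x * x := by
      rw [← pow_succ, ← pow_succ]
      congr 1
    rw [e, ← mul_assoc, ← mul_assoc, ih]
    simp only [neg_mul, mul_assoc, h, mul_neg, neg_neg]

/-- Image of `u`. -/
def matP : Matrix (Fin 2) (Fin 2) ℂ := !![1, 0; 0, -1]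

/-- Image of `v`. -/
def matQ (l : ℂ) : Matrix (Fin 2) (Fin 2) ℂ := !![0, 1; -l, 0]

lemma matP_sq : matP ^ 2 = 1 := by
  rw [pow_two, matP]
  ext i j
  fin_cases i <;> fin_cases j <;> simp

lemma matQ_sq (l : ℂ) : matQ l ^ 2 = (-l) • (1 : Matrix (Fin 2) (Fin 2) ℂ) := by
  rw [pow_two, matQ]
  ext i j
  fin_cases i <;> fin_cases j <;> simp

lemma matPQ (l : ℂ) : matP * matQ l + matQ l * matP = 0 := by
  rw [matP, matQ]
  ext i j
  fin_cases i <;> fin_cases j <;> simp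

/-- The two-dimensional representation of `A`. -/
def rep (l : ℂ) : SkewAlg →ₐ[ℂ] Matrix (Fin 2) (Fin 2) ℂ :=
  RingQuot.liftAlgHom ℂ ⟨FreeAlgebra.lift ℂ ![matP, matQ l], by
    rintro _ _ ⟨⟩
    simpa using matPQ l⟩

lemma rep_u (l : ℂ) : rep l uGen = matP := by
  simp [rep, uGen]

lemma rep_v (l : ℂ) : rep l vGen = matQ l := by
  simp [rep, vGen]

lemma matP_pow (i j : ℕ) : matP ^ (i + 2 * j) = matP ^ i := by
  rw [pow_add, pow_mul, matP_sq, one_pow, mul_one]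

lemma matQ_pow (l : ℂ) (i j : ℕ) : matQ l ^ (i + 2 * j) = (-l) ^ j • matQ l ^ i := by
  rw [pow_add, pow_mul, matQ_sq, smul_pow, one_pow, mul_smul_comm, mul_one]

lemma rep_orbit (n i j : ℕ) : rep (lam n) (orbitSum n (i + 2 * j) i) =
    (1 + (- lam n) ^ (i + j)) • (matP ^ i * matQ (lam n) ^ i) := by
  have hs : (-1 : ℂ) ^ ((i + 2 * j) * i) = (-1) ^ i := by
    rw [mul_comm, pow_mul, pow_add, pow_mul]
    rcases Nat.even_or_odd i with h | h <;> simp [h.neg_one_pow]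
  rw [orbitSum, map_add, map_smul, map_mul, map_mul, map_pow, map_pow, map_pow, map_pow,
    rep_u, rep_v, matP_pow, matQ_pow, hs, mul_smul_comm, smul_smul, add_smul, one_smul,
    ← mul_pow, neg_one_mul, ← pow_add]

lemma lam_pow (n : ℕ) (hn : 0 < n) : lam n ^ n = 1 :=
  (Complex.isPrimitiveRoot_exp n hn.ne').pow_eq_one

lemma lam_pow_half (k : ℕ) (hk : 0 < k) : lam (2 * k) ^ k = -1 := by
  rw [lam, ← Complex.exp_nat_mul, ← Complex.exp_pi_mul_I]
  congr 1
  have : (k : ℂ) ≠ 0 := by exact_mod_cast hk.ne'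
  push_cast
  field_simp

/-- If `n ≡ 0 (mod 4)` (and `n > 0`) then the fixed subring `A^G` is strictly
larger than the `ℂ`-subalgebra generated by the orbit sums of degree `n`. -/
theorem fixed_ne_adjoin_of_mod_four_eq_zero (n : ℕ) (hn : 0 < n) (h4 : n % 4 = 0)
    (g : SkewAlg ≃ₐ[ℂ] SkewAlg) (hgu : g uGen = vGen) (hgv : g vGen = lam n • uGen) :
    {a : SkewAlg | g a = a} ≠
      ↑(Algebra.adjoin ℂ {x : SkewAlg | ∃ i : ℕ, i ≤ n / 2 ∧ x = orbitSum n (n - i) i}) := by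
  intro hEq
  obtain ⟨m, rfl⟩ : ∃ m, n = 4 * m := ⟨n / 4, by omega⟩
  have hm : 0 < m := by omega
  set n := 4 * m with hnm
  have hhalf : (- lam n) ^ (2 * m) = -1 := by
    have h := lam_pow_half (2 * m) (by omega)
    rw [show 2 * (2 * m) = n by omega] at h
    rw [neg_pow, h]
    simp
  -- the image of the generated subalgebra consists of scalars
  have hle : Algebra.adjoin ℂ {x : SkewAlg | ∃ i : ℕ, i ≤ n / 2 ∧ x = orbitSum n (n - i) i} ≤
      (⊥ : Subalgebra ℂ (Matrix (Fin 2) (Fin 2) ℂ)).comap (rep (lam n)) := by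
    rw [Algebra.adjoin_le_iff]
    rintro _ ⟨i, hi, rfl⟩
    have e : n - i = i + 2 * (2 * m - i) := by omega
    have e2 : i + (2 * m - i) = 2 * m := by omega
    have h0 : rep (lam n) (orbitSum n (n - i) i) = 0 := by
      rw [e, rep_orbit, e2, hhalf]
      simp
    change rep (lam n) (orbitSum n (n - i) i) ∈ (⊥ : Subalgebra ℂ (Matrix (Fin 2) (Fin 2) ℂ))
    rw [h0]
    exact zero_mem _
  have hfix : orbitSum n (1 + 2 * (n - 1)) 1 ∈ {a : SkewAlg | g a = a} := by
    have h1 : vGen ^ (1 + 2 * (n - 1)) * uGen = -(uGen * vGen ^ (1 + 2 * (n - 1))) := by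
      have h := anti_odd vGen uGen (by rw [skew_vu, neg_neg]) (n - 1)
      rw [add_comm 1, h, neg_neg]
    have h2 : vGen * uGen ^ (1 + 2 * (n - 1)) = -(uGen ^ (1 + 2 * (n - 1)) * vGen) := by
      have h := anti_odd uGen vGen skew_vu (n - 1)
      rw [add_comm 1, h]
    have hl : lam n * lam n ^ (1 + 2 * (n - 1)) = 1 := by
      rw [← pow_succ', show 1 + 2 * (n - 1) + 1 = n * 2 by omega, pow_mul, lam_pow n hn, one_pow]
    have hs : (-1 : ℂ) ^ ((1 + 2 * (n - 1)) * 1) = -1 := by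
      rw [mul_one, pow_add, pow_mul]; simp
    rw [Set.mem_ofPred_eq, orbitSum, hs]
    simp only [pow_one, map_add, map_mul, map_smul, map_pow, hgu, hgv, smul_pow, mul_smul_comm,
      h1, h2, smul_smul, smul_neg, neg_mul, one_mul, neg_smul, neg_neg, hl, one_smul]
    rw [add_comm]
    exact congrArg _ (neg_smul _ _).symm
  rw [hEq] at hfix
  have hb : rep (lam n) (orbitSum n (1 + 2 * (n - 1)) 1) ∈
      (⊥ : Subalgebra ℂ (Matrix (Fin 2) (Fin 2) ℂ)) := hle hfix
  have hfull : (- lam n) ^ (1 + (n - 1)) = 1 := by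
    rw [show 1 + (n - 1) = 2 * m * 2 by omega, pow_mul, hhalf]
    norm_num
  rw [rep_orbit, hfull, Algebra.mem_bot] at hb
  obtain ⟨c, hc⟩ := hb
  have h01 := congrFun (congrFun hc 0) 1
  simp [matP, matQ, Matrix.algebraMap_matrix_apply] at h01
  norm_num at h01
end
end

section
/- Suppose n ≡ 0 (mod 4). For each nonnegative integer p set x_p := (−1)^{⌊(p+1)/2⌋} λ^{⌊(p+1)/2⌋} ∈ ℂ. Then for all integers i, j with 0 ≤ j ≤ i < n/2, one has (−1)^{ij} x_{i+j} + (−1)^{i(j+1)} λ^i x_{n−i+j} = 0. (This exhibits a nontrivial solution of the homogeneous linear system arising from products of degree-n orbit sums in the skew polynomial ring.) -/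
noncomputable section

/-- The candidate solution `x_p = (-1)^⌊(p+1)/2⌋ λ^⌊(p+1)/2⌋`. -/
def xSol (n p : ℕ) : ℂ := (-1 : ℂ) ^ ((p + 1) / 2) * lam n ^ ((p + 1) / 2)

/-- If `n ≡ 0 (mod 4)` (and `n > 0`), then `x_p = (-1)^⌊(p+1)/2⌋ λ^⌊(p+1)/2⌋`
solves the homogeneous system
`0 = (-1)^(ij) x_(i+j) + (-1)^(i(j+1)) λ^i x_(n-i+j)` for `0 ≤ j ≤ i < n/2`. -/
theorem xSol_solves_system (n : ℕ) (hn : 0 < n) (h4 : n % 4 = 0)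
    (i j : ℕ) (hji : j ≤ i) (hi : i < n / 2) :
    (-1 : ℂ) ^ (i * j) * xSol n (i + j) +
      (-1 : ℂ) ^ (i * (j + 1)) * lam n ^ i * xSol n (n - i + j) = 0 := by
  obtain ⟨m, rfl⟩ : ∃ m, n = 4 * m := ⟨n / 4, by omega⟩
  have hm : (m : ℂ) ≠ 0 := by
    have : m ≠ 0 := by omega
    exact_mod_cast this
  have hl : lam (4 * m) ^ (2 * m) = -1 := by
    unfold lam
    rw [← Complex.exp_nat_mul, ← Complex.exp_pi_mul_I]
    congr 1
    push_cast
    field_simp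
    ring
  unfold xSol
  have hab : i + (4 * m - i + j + 1) / 2 = (i + j + 1) / 2 + 2 * m := by omega
  generalize (4 * m - i + j + 1) / 2 = b at *
  generalize (i + j + 1) / 2 = a at *
  have h1 : lam (4 * m) ^ i * lam (4 * m) ^ b = - lam (4 * m) ^ a := by
    rw [← pow_add, hab, pow_add, hl]
    ring
  have h2 : (-1 : ℂ) ^ i * (-1) ^ b = (-1) ^ a := by
    rw [← pow_add, hab, pow_add, pow_mul]
    simp
  rw [mul_add, pow_add, mul_one]
  linear_combination (-1 : ℂ) ^ (i * j) * (-1) ^ i * (-1) ^ b * h1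
    - (-1 : ℂ) ^ (i * j) * lam (4 * m) ^ a * h2
end
end
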